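/- Let φ be a strongly monotone continuous semiflow on a metric space X (setting as in the context), with all orbits precompact and ≪ quasi-closed. If x ≤ y with x ≠ y, then either ω(x) ≪ ω(y) (pointwise), or ω(x) = ω(y) and every point of this common limit set is an equilibrium. -/

import Mathlib

open Filter Topology

/-!
A strongly monotone semiflow is strongly order-preserving: if `x < y`, its time-one map carries a
neighbourhood of `x` below a neighbourhood of `y`. The ω-limit sets of such a semiflow are
antichains: if `p < q` both lie in `ω(z)`, some `w` on the orbit of `z` satisfies `w ≤ φ t w` for
all `t` near a time `T ≠ 0`. These return times form a submonoid of `ℝ≥0`, so they contain all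
large times, and monotonicity then forces `ω(w) = ω(z)` to be a single point.

Now let `x < y`, and let `a ≤ b` be limits of the orbits of `x` and `y` along common times. If
`a = b` for all such pairs, then `ω(x) = ω(y)`; comparing the orbits at slightly shifted times gives
`φ h a = a` for all small `h`, hence for all `h`. If `a < b` for one pair, then
`{s | a ≤ φ s b}` is open and closed in `ℝ≥0`, so `a` lies strictly below `ω(b)`. A neighbourhood of
`a` is eventually carried below the compact invariant set `ω(b)`, which gives `ω(x) < ω(b)`; the
dual argument with `ω(b) ⊆ ω(y)` gives `ω(x) < ω(y)`. Finally, ω-limit sets are invariant, so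
strong monotonicity turns `<` into `≪`.
-/

open Set
open scoped NNReal

section SubmonoidsOfNNReal

theorem tendsto_div_floor_div_atTop {T : ℝ≥0} (hT : T ≠ 0) :
    Tendsto (fun t : ℝ≥0 ↦ t / ⌊t / T⌋₊) atTop (𝓝 T) := by
  have hfloor : Tendsto (fun t : ℝ≥0 ↦ (⌊T⁻¹ * t⌋₊ : ℝ≥0) / t) atTop (𝓝 T⁻¹) :=
    NNReal.tendsto_coe.1 <| (tendsto_nat_floor_mul_div_atTop T⁻¹.coe_nonneg).comp
      (NNReal.tendsto_coe_atTop.2 tendsto_id)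
  simpa only [inv_div, inv_inv, inv_mul_eq_div] using hfloor.inv₀ (inv_ne_zero hT)

theorem mem_atTop_of_mem_nhds_addSubmonoid (S : AddSubmonoid ℝ≥0) {T : ℝ≥0} (hT : T ≠ 0)
    (hS : (S : Set ℝ≥0) ∈ 𝓝 T) : (S : Set ℝ≥0) ∈ atTop := by
  filter_upwards [tendsto_div_floor_div_atTop hT hS, eventually_ge_atTop T] with t ht hTt
  have hfloor : (⌊t / T⌋₊ : ℝ≥0) ≠ 0 := by
    simpa using (one_le_div (pos_iff_ne_zero.2 hT)).2 hTt
  simpa [mul_div_cancel₀ t hfloor] using S.nsmul_mem ht ⌊t / T⌋₊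

theorem addSubmonoid_eq_top_of_mem_nhds_zero (S : AddSubmonoid ℝ≥0)
    (hS : (S : Set ℝ≥0) ∈ 𝓝 0) : S = ⊤ := by
  refine eq_top_iff.2 fun t _ ↦ ?_
  obtain ⟨n, hn, hn0⟩ := ((tendsto_const_div_atTop_nhds_zero_nat t).eventually hS |>.and
    (eventually_ne_atTop 0)).exists
  have hn0' : (n : ℝ≥0) ≠ 0 := Nat.cast_ne_zero.2 hn0
  simpa [mul_div_cancel₀ t hn0'] using S.nsmul_mem hn n

end SubmonoidsOfNNReal

section OmegaLimit

theorem map_add_const_atTop {τ : Type*} [AddCommMonoid τ] [PartialOrder τ]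
    [CanonicallyOrderedAdd τ] (s : τ) : map (· + s) atTop = atTop := by
  refine le_antisymm (tendsto_atTop_mono (fun _ ↦ le_self_add) tendsto_id) fun U hU ↦ ?_
  have : IsDirectedOrder τ := ⟨fun a b ↦ ⟨a + b, le_self_add, le_add_self⟩⟩
  obtain ⟨r, hr⟩ := mem_atTop_sets.1 (mem_map.1 hU)
  refine mem_atTop_sets.2 ⟨r + s, fun t ht ↦ ?_⟩
  obtain ⟨c, rfl⟩ := exists_add_of_le ht
  simpa [add_right_comm] using hr (r + c) le_self_add

variable {τ X : Type*} [TopologicalSpace τ] [AddCommMonoid τ] [TopologicalSpace X]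
  {φ : Flow τ X} {a b u v z : X}

theorem flow_comm (φ : Flow τ X) (s t : τ) (x : X) : φ s (φ t x) = φ t (φ s x) := by
  rw [← φ.map_add, ← φ.map_add, add_comm]

theorem omegaLimit_subset_closure_orbit (φ : Flow τ X) (f : Filter τ) (z : X) :
    omegaLimit f φ {z} ⊆ closure (φ.orbit z) := by
  simpa [Flow.orbit_eq_range] using omegaLimit_subset_closure_image2 f φ {z} univ_mem

theorem isCompact_omegaLimit (f : Filter τ) (hz : IsCompact (closure (φ.orbit z))) :
    IsCompact (omegaLimit f φ {z}) :=
  hz.of_isClosed_subset (isClosed_omegaLimit _ _ _) (omegaLimit_subset_closure_orbit φ f z)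

theorem omegaLimit_nonempty (f : Filter τ) [f.NeBot] (hz : IsCompact (closure (φ.orbit z))) :
    (omegaLimit f φ {z}).Nonempty :=
  nonempty_omegaLimit_of_isCompact_absorbing f φ {z} hz
    ⟨univ, univ_mem, by simp [Flow.orbit_eq_range]⟩ (singleton_nonempty z)

variable [PartialOrder τ]

/-- `a` and `b` are limits of the orbits of `u` and `v` along common times: `(a, b)` belongs to the
ω-limit set of `(u, v)` under the product flow. -/
def IsJointLimit (φ : Flow τ X) (u v a b : X) : Prop :=
  MapClusterPt (a, b) atTop fun t ↦ (φ t u, φ t v)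

namespace IsJointLimit

theorem swap (h : IsJointLimit φ u v a b) : IsJointLimit φ v u b a :=
  h.continuousAt_comp continuous_swap.continuousAt

theorem left_mem (h : IsJointLimit φ u v a b) : a ∈ omegaLimit atTop φ {u} :=
  (mem_omegaLimit_singleton_iff_mapClusterPt _ _ _ _).2
    (h.continuousAt_comp continuous_fst.continuousAt)

theorem right_mem (h : IsJointLimit φ u v a b) : b ∈ omegaLimit atTop φ {v} :=
  h.swap.left_mem

theorem exists_of_left_mem (hv : IsCompact (closure (φ.orbit v)))
    (ha : a ∈ omegaLimit atTop φ {u}) : ∃ b, IsJointLimit φ u v a b := by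
  obtain ⟨F, hF, hFa⟩ := mapClusterPt_iff_ultrafilter.1
    ((mem_omegaLimit_singleton_iff_mapClusterPt _ _ _ _).1 ha)
  obtain ⟨b, -, hFb⟩ := hv.ultrafilter_le_nhds (F.map fun t ↦ φ t v) <|
    le_principal_iff.2 <| univ_mem' (f := (F : Filter τ)) fun t ↦ subset_closure (φ.mem_orbit v t)
  exact ⟨b, mapClusterPt_iff_ultrafilter.2 ⟨F, hF, hFa.prodMk_nhds hFb⟩⟩

theorem mem_of_isClosed {C : Set (X × X)} (h : IsJointLimit φ u v a b) (hC : IsClosed C)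
    (hmem : ∀ᶠ t in atTop, (φ t u, φ t v) ∈ C) : (a, b) ∈ C :=
  hC.mem_of_mapClusterPt h hmem

theorem flow_right (h : IsJointLimit φ u v a b) (s : τ) :
    IsJointLimit φ u (φ s v) a (φ s b) := by
  have hcont : Continuous fun q : X × X ↦ (q.1, φ s q.2) := by fun_prop
  simpa only [IsJointLimit, Function.comp_def, flow_comm φ s] using
    h.continuousAt_comp hcont.continuousAt

end IsJointLimit

variable [CanonicallyOrderedAdd τ]

theorem omegaLimit_flow (φ : Flow τ X) (s : τ) (z : X) :
    omegaLimit atTop φ {φ s z} = omegaLimit atTop φ {z} := by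
  ext p
  simp only [mem_omegaLimit_singleton_iff_mapClusterPt, ← φ.map_add]
  change MapClusterPt p atTop ((fun t ↦ φ t z) ∘ (· + s)) ↔ _
  rw [mapClusterPt_comp, map_add_const_atTop]

theorem isInvariant_omegaLimit_atTop (φ : Flow τ X) (Z : Set X) :
    IsInvariant φ (omegaLimit atTop φ Z) :=
  φ.isInvariant_omegaLimit atTop Z fun _ ↦ tendsto_atTop_mono (fun _ ↦ le_add_self) tendsto_id

theorem surjOn_omegaLimit [T2Space X] (hz : IsCompact (closure (φ.orbit z))) (s : τ) :
    SurjOn (φ s) (omegaLimit atTop φ {z}) (omegaLimit atTop φ {z}) := by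
  intro p hp
  rw [← omegaLimit_flow φ s] at hp
  obtain ⟨p', hp'⟩ := IsJointLimit.exists_of_left_mem hz hp
  exact ⟨p', hp'.right_mem, hp'.mem_of_isClosed (C := {q | φ s q.2 = q.1})
    (isClosed_eq (by fun_prop) continuous_fst) (.of_forall fun t ↦ flow_comm φ s t z)⟩

theorem closure_orbit_subset_omegaLimit (ha : a ∈ omegaLimit atTop φ {z}) :
    closure (φ.orbit a) ⊆ omegaLimit atTop φ {z} := by
  refine closure_minimal ?_ (isClosed_omegaLimit _ _ _)
  rintro _ ⟨t, rfl⟩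
  exact isInvariant_omegaLimit_atTop φ {z} t ha

end OmegaLimit

section OrderPreserving

variable {τ X : Type*} [TopologicalSpace τ] [AddCommMonoid τ] [TopologicalSpace X] [PartialOrder X]
  {φ : Flow τ X} {a u v w : X} {K : Set X}

/-- Some time-`t` map of the flow carries a neighbourhood of `u` below a neighbourhood of `v`. For a
monotone semiflow the same neighbourhoods then stay ordered at all later times. -/
def LocallyEventuallyLE (φ : Flow τ X) (u v : X) : Prop :=
  ∃ t, ∀ᶠ q in 𝓝 (u, v), φ t q.1 ≤ φ t q.2

/-- Strongly order-preserving (semi)flows in the sense of Matano and of Smith and Thieme: the order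
is preserved, and strictly ordered points have neighbourhoods that become ordered. -/
structure IsStronglyOrderPreserving (φ : Flow τ X) : Prop where
  monotone (t : τ) : Monotone (φ t)
  locallyEventuallyLE {x y : X} : x < y → LocallyEventuallyLE φ x y

theorem LocallyEventuallyLE.of_flow {t : τ} (h : LocallyEventuallyLE φ (φ t u) (φ t v)) :
    LocallyEventuallyLE φ u v := by
  obtain ⟨s, hs⟩ := h
  have hcont : Continuous fun q : X × X ↦ (φ t q.1, φ t q.2) := by fun_prop
  exact ⟨s + t, by simpa only [φ.map_add] using (hcont.tendsto (u, v)).eventually hs⟩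

namespace IsStronglyOrderPreserving

protected theorem dual (hφ : IsStronglyOrderPreserving φ) :
    IsStronglyOrderPreserving (X := Xᵒᵈ) φ where
  monotone t := (hφ.monotone t).dual
  locallyEventuallyLE {x y} hxy :=
    (hφ.locallyEventuallyLE (show OrderDual.ofDual y < OrderDual.ofDual x from hxy)).imp
      fun _ ht ↦ (continuous_swap.tendsto (x, y)).eventually ht

theorem exists_eventually_forall_le (hφ : IsStronglyOrderPreserving φ) (hK : IsCompact K)
    (haK : ∀ w ∈ K, a < w) : ∃ t, ∀ᶠ x in 𝓝 a, ∀ w ∈ K, φ t x ≤ φ t w := by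
  refine hK.induction_on ⟨0, by simp⟩ (fun K₁ K₂ hsub ⟨t, ht⟩ ↦ ⟨t, ?_⟩)
    (fun K₁ K₂ ⟨t₁, h₁⟩ ⟨t₂, h₂⟩ ↦ ⟨t₁ + t₂, ?_⟩) fun w hw ↦ ?_
  · exact ht.mono fun x hx w hw ↦ hx w (hsub hw)
  · filter_upwards [h₁, h₂] with x hx₁ hx₂ w hw
    rcases hw with hw | hw
    · simpa only [add_comm t₁ t₂, φ.map_add] using hφ.monotone t₂ (hx₁ w hw)
    · simpa only [φ.map_add] using hφ.monotone t₁ (hx₂ w hw)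
  · obtain ⟨t, ht⟩ := hφ.locallyEventuallyLE (haK w hw)
    obtain ⟨U, hU, V, hV, hUV⟩ := mem_nhds_prod_iff.1 ht
    exact ⟨V, mem_nhdsWithin_of_mem_nhds hV, t, mem_of_superset hU fun x hx w hw ↦
      hUV (mk_mem_prod hx hw)⟩

end IsStronglyOrderPreserving

variable [PartialOrder τ]

theorem IsJointLimit.locallyEventuallyLE {b : X} (hab : IsJointLimit φ u v a b)
    (h : LocallyEventuallyLE φ a b) : LocallyEventuallyLE φ u v := by
  obtain ⟨t, ht⟩ := h
  obtain ⟨s, hs⟩ := (MapClusterPt.frequently hab ht.eventually_nhds).exists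
  exact .of_flow ⟨t, hs⟩

variable [OrderClosedTopology X] [CanonicallyOrderedAdd τ]

theorem omegaLimit_subsingleton_of_eventually_le (hφ : ∀ t, Monotone (φ t))
    (hw : ∀ᶠ t in atTop, w ≤ φ t w) : (omegaLimit atTop φ {w}).Subsingleton := by
  suffices hle : ∀ p ∈ omegaLimit atTop φ {w}, ∀ q ∈ omegaLimit atTop φ {w}, p ≤ q from
    fun p hp q hq ↦ (hle p hp q hq).antisymm (hle q hq p hp)
  intro p hp q hq
  have horbit_le (s : τ) : φ s w ≤ q := by
    rw [← omegaLimit_flow φ s, mem_omegaLimit_singleton_iff_mapClusterPt] at hq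
    refine isClosed_Ici.mem_of_mapClusterPt hq (hw.mono fun t ht ↦ ?_)
    rw [flow_comm]
    exact hφ s ht
  exact isClosed_Iic.mem_of_mapClusterPt
    ((mem_omegaLimit_singleton_iff_mapClusterPt _ _ _ _).1 hp) (.of_forall horbit_le)

theorem IsStronglyOrderPreserving.le_of_mem_omegaLimit_of_forall_lt
    (hφ : IsStronglyOrderPreserving φ) (hK : IsCompact K) (hsurj : ∀ t, SurjOn (φ t) K K)
    (ha : a ∈ omegaLimit atTop φ {u}) (haK : ∀ w ∈ K, a < w) :
    ∀ p ∈ omegaLimit atTop φ {u}, ∀ w ∈ K, p ≤ w := by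
  obtain ⟨t, ht⟩ := hφ.exists_eventually_forall_le hK haK
  obtain ⟨s, hs⟩ :=
    (((mem_omegaLimit_singleton_iff_mapClusterPt _ _ _ _).1 ha).frequently ht).exists
  intro p hp w hw
  rw [← omegaLimit_flow φ s, ← omegaLimit_flow φ t, mem_omegaLimit_singleton_iff_mapClusterPt] at hp
  refine isClosed_Iic.mem_of_mapClusterPt hp (.of_forall fun r ↦ ?_)
  obtain ⟨w', hw', rfl⟩ := hsurj (r + t) hw
  rw [mem_Iic, φ.map_add]
  exact hφ.monotone r (hs w' hw')

theorem IsJointLimit.eventually_le {b : X} {g h : τ} (hφ : ∀ t, Monotone (φ t))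
    (hab : IsJointLimit φ u v a b) (huv : LocallyEventuallyLE φ (φ g u) (φ h v)) :
    ∀ᶠ q in 𝓝 (g, h), φ q.1 a ≤ φ q.2 b := by
  obtain ⟨t, ht⟩ := huv
  have hcont : Continuous fun q : τ × τ ↦ (φ q.1 u, φ q.2 v) := by fun_prop
  filter_upwards [hcont.continuousAt.eventually ht] with q hq
  refine hab.mem_of_isClosed (C := {r | φ q.1 r.1 ≤ φ q.2 r.2})
    (isClosed_le (by fun_prop) (by fun_prop)) ?_
  filter_upwards [eventually_ge_atTop t] with s hts
  obtain ⟨r, rfl⟩ := exists_add_of_le hts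
  simpa only [add_comm t r, φ.map_add, flow_comm φ q.1, flow_comm φ q.2] using hφ r hq

end OrderPreserving

section Semiflow

variable {X : Type*} [TopologicalSpace X] [PartialOrder X] {φ : Flow ℝ≥0 X} {x y a b z p : X}

/-- Strong monotonicity of a semiflow, with `r` in the role of the strong order relation `≪`. -/
def IsStronglyMonotone (φ : Flow ℝ≥0 X) (r : X → X → Prop) : Prop :=
  ∀ ⦃x y⦄, x < y → ∀ ⦃t⦄, 0 < t → r (φ t x) (φ t y)

theorem IsStronglyMonotone.isStronglyOrderPreserving {r : X → X → Prop}
    (hφ : IsStronglyMonotone φ r) (hr_le : ∀ a b, r a b → a ≤ b)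
    (hr_open : IsOpen {q : X × X | r q.1 q.2}) : IsStronglyOrderPreserving φ where
  monotone t x y hxy := by
    rcases hxy.eq_or_lt with rfl | hxy
    · rfl
    rcases eq_zero_or_pos t with rfl | ht
    · simpa using hxy.le
    · exact hr_le _ _ (hφ hxy ht)
  locallyEventuallyLE {x y} hxy := by
    have hcont : Continuous fun q : X × X ↦ (φ 1 q.1, φ 1 q.2) := by fun_prop
    exact ⟨1, ((hcont.tendsto (x, y)).eventually (hr_open.mem_nhds (hφ hxy one_pos))).mono
      fun q hq ↦ hr_le _ _ hq⟩

variable [OrderClosedTopology X]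

theorem omegaLimit_subsingleton_of_eventually_nhds_le {T : ℝ≥0} (hφ : ∀ t, Monotone (φ t))
    (hT : T ≠ 0) (hz : ∀ᶠ t in 𝓝 T, z ≤ φ t z) : (omegaLimit atTop φ {z}).Subsingleton := by
  let returnTimes : AddSubmonoid ℝ≥0 :=
    { carrier := {r | z ≤ φ r z}
      zero_mem' := (φ.map_zero_apply z).ge
      add_mem' := fun {r₁ r₂} h₁ h₂ ↦ by
        simpa only [mem_ofPred_eq, φ.map_add] using le_trans h₁ (hφ r₁ h₂) }
  exact omegaLimit_subsingleton_of_eventually_le hφ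
    (mem_atTop_of_mem_nhds_addSubmonoid returnTimes hT hz)

namespace IsStronglyOrderPreserving

theorem isAntichain_omegaLimit (hφ : IsStronglyOrderPreserving φ) (z : X) :
    IsAntichain (· ≤ ·) (omegaLimit atTop φ {z}) := by
  intro p hp q hq hne hle
  obtain ⟨t, ht⟩ := hφ.locallyEventuallyLE (hle.lt_of_ne hne)
  rw [nhds_prod_eq] at ht
  obtain ⟨U, hU, V, hV, hUV⟩ := eventually_prod_iff.1 ht
  obtain ⟨s, hsU⟩ :=
    (((mem_omegaLimit_singleton_iff_mapClusterPt _ _ _ _).1 hp).frequently hU).exists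
  have hq' := hq
  rw [← omegaLimit_flow φ s, mem_omegaLimit_singleton_iff_mapClusterPt] at hq'
  obtain ⟨T, hTV, hT0⟩ :=
    ((hq'.frequently hV.eventually_nhds).and_eventually (eventually_ne_atTop 0)).exists
  have hreturn : ∀ᶠ r in 𝓝 T, φ t (φ s z) ≤ φ r (φ t (φ s z)) := by
    have hcont : Continuous fun r ↦ φ r (φ s z) := by fun_prop
    filter_upwards [hcont.continuousAt.eventually hTV] with r hr
    rw [flow_comm φ r]
    exact hUV hsU hr
  have hsub := omegaLimit_subsingleton_of_eventually_nhds_le hφ.monotone hT0 hreturn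
  simp only [omegaLimit_flow] at hsub
  exact hne (hsub hp hq)

theorem lt_of_mem_omegaLimit_of_forall_lt (hφ : IsStronglyOrderPreserving φ) {K : Set X}
    (hK : IsCompact K) (hsurj : ∀ t, SurjOn (φ t) K K) (ha : a ∈ omegaLimit atTop φ {z})
    (haK : ∀ w ∈ K, a < w) : ∀ p ∈ omegaLimit atTop φ {z}, ∀ w ∈ K, p < w := by
  intro p hp w hw
  refine (hφ.le_of_mem_omegaLimit_of_forall_lt hK hsurj ha haK p hp w hw).lt_of_ne ?_
  rintro rfl
  exact hφ.isAntichain_omegaLimit z ha hp (haK p hw).ne (haK p hw).le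

theorem flow_eq_self_of_isJointLimit_self (hφ : IsStronglyOrderPreserving φ) (hxy : x < y)
    (hp : IsJointLimit φ x y p p) (t : ℝ≥0) : φ t p = p := by
  have hev : ∀ᶠ q in 𝓝 ((0 : ℝ≥0), (0 : ℝ≥0)), φ q.1 p ≤ φ q.2 p :=
    hp.eventually_le hφ.monotone (by simpa using hφ.locallyEventuallyLE hxy)
  have hge : ∀ᶠ h in 𝓝 (0 : ℝ≥0), p ≤ φ h p := by
    simpa using (Continuous.prodMk_right (0 : ℝ≥0)).continuousAt.eventually hev
  have hle : ∀ᶠ h in 𝓝 (0 : ℝ≥0), φ h p ≤ p := by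
    simpa using (Continuous.prodMk_left (0 : ℝ≥0)).continuousAt.eventually hev
  let fixedTimes : AddSubmonoid ℝ≥0 :=
    { carrier := {h | φ h p = p}
      zero_mem' := φ.map_zero_apply p
      add_mem' := fun {r₁ r₂} h₁ h₂ ↦ by
        rw [mem_ofPred_eq] at *
        rw [φ.map_add, h₂, h₁] }
  have htop : fixedTimes = ⊤ := addSubmonoid_eq_top_of_mem_nhds_zero fixedTimes <| by
    filter_upwards [hge, hle] with h h₁ h₂ using h₂.antisymm h₁
  exact (htop ▸ AddSubmonoid.mem_top t : t ∈ fixedTimes)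

theorem lt_flow_of_isJointLimit (hφ : IsStronglyOrderPreserving φ)
    (hab : IsJointLimit φ x y a b) (hlt : a < b) (t : ℝ≥0) : a < φ t b := by
  have ha : a ∉ omegaLimit atTop φ {y} := fun h ↦
    hφ.isAntichain_omegaLimit y h hab.right_mem hlt.ne hlt.le
  have hne (s : ℝ≥0) : a ≠ φ s b := fun h ↦
    ha (h ▸ isInvariant_omegaLimit_atTop φ {y} s hab.right_mem)
  have hclopen : IsClopen {s | a ≤ φ s b} := by
    refine ⟨isClosed_le continuous_const (by fun_prop), isOpen_iff_mem_nhds.2 fun s hs ↦ ?_⟩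
    have hxy : LocallyEventuallyLE φ x (φ s y) := (hab.flow_right s).locallyEventuallyLE
      (hφ.locallyEventuallyLE (lt_of_le_of_ne hs (hne s)))
    have hev : ∀ᶠ q in 𝓝 ((0 : ℝ≥0), s), φ q.1 a ≤ φ q.2 b :=
      hab.eventually_le hφ.monotone (by simpa using hxy)
    change ∀ᶠ r in 𝓝 s, a ≤ φ r b
    simpa using (Continuous.prodMk_right (0 : ℝ≥0)).continuousAt.eventually hev
  have huniv := hclopen.eq_univ ⟨0, by simpa using hlt.le⟩
  exact lt_of_le_of_ne (huniv ▸ mem_univ t : t ∈ {s | a ≤ φ s b}) (hne t)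

theorem omegaLimit_lt_of_isJointLimit (hφ : IsStronglyOrderPreserving φ)
    (hx : IsCompact (closure (φ.orbit x))) (hy : IsCompact (closure (φ.orbit y)))
    (hab : IsJointLimit φ x y a b) (hlt : a < b) :
    ∀ p ∈ omegaLimit atTop φ {x}, ∀ q ∈ omegaLimit atTop φ {y}, p < q := by
  have horbit_b : closure (φ.orbit b) ⊆ omegaLimit atTop φ {y} :=
    closure_orbit_subset_omegaLimit hab.right_mem
  have hb : IsCompact (closure (φ.orbit b)) :=
    (isCompact_omegaLimit atTop hy).of_isClosed_subset isClosed_closure horbit_b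
  have hωb : omegaLimit atTop φ {b} ⊆ omegaLimit atTop φ {y} :=
    (omegaLimit_subset_closure_orbit φ atTop b).trans horbit_b
  have ha_lt : ∀ w ∈ omegaLimit atTop φ {b}, a < w := fun w hw ↦ by
    refine lt_of_le_of_ne (isClosed_Ici.mem_of_mapClusterPt
      ((mem_omegaLimit_singleton_iff_mapClusterPt _ _ _ _).1 hw)
      (.of_forall fun t ↦ (hφ.lt_flow_of_isJointLimit hab hlt t).le)) ?_
    rintro rfl
    exact hφ.isAntichain_omegaLimit y (hωb hw) hab.right_mem hlt.ne hlt.le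
  have hx_lt := hφ.lt_of_mem_omegaLimit_of_forall_lt (isCompact_omegaLimit atTop hb)
    (surjOn_omegaLimit hb) hab.left_mem ha_lt
  obtain ⟨c, hc⟩ := omegaLimit_nonempty atTop hb
  have hy_gt := hφ.dual.lt_of_mem_omegaLimit_of_forall_lt (isCompact_omegaLimit atTop hx)
    (surjOn_omegaLimit (X := X) hx) (hωb hc) fun w hw ↦ hx_lt w hw c hc
  exact fun p hp q hq ↦ hy_gt q hq p hp

theorem omegaLimit_dichotomy (hφ : IsStronglyOrderPreserving φ)
    (hx : IsCompact (closure (φ.orbit x))) (hy : IsCompact (closure (φ.orbit y))) (hxy : x < y) :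
    (∀ p ∈ omegaLimit atTop φ {x}, ∀ q ∈ omegaLimit atTop φ {y}, p < q) ∨
      (omegaLimit atTop φ {x} = omegaLimit atTop φ {y} ∧
        ∀ p ∈ omegaLimit atTop φ {x}, ∀ t, φ t p = p) := by
  by_cases hdiag : ∀ a b, IsJointLimit φ x y a b → a = b
  · refine .inr ⟨Subset.antisymm (fun p hp ↦ ?_) (fun p hp ↦ ?_), fun p hp ↦ ?_⟩
    · obtain ⟨b, hb⟩ := IsJointLimit.exists_of_left_mem hy hp
      exact hdiag p b hb ▸ hb.right_mem
    · obtain ⟨a, ha⟩ := IsJointLimit.exists_of_left_mem hx hp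
      exact hdiag a p ha.swap ▸ ha.right_mem
    · obtain ⟨b, hb⟩ := IsJointLimit.exists_of_left_mem hy hp
      obtain rfl := hdiag p b hb
      exact hφ.flow_eq_self_of_isJointLimit_self hxy hb
  · push Not at hdiag
    obtain ⟨a, b, hab, hne⟩ := hdiag
    have hle : a ≤ b := hab.mem_of_isClosed (C := {q | q.1 ≤ q.2}) isClosed_le_prod
      (.of_forall fun t ↦ hφ.monotone t hxy.le)
    exact .inl (hφ.omegaLimit_lt_of_isJointLimit hx hy hab (hle.lt_of_ne hne))

end IsStronglyOrderPreserving

theorem limit_set_dichotomy_general {r : X → X → Prop} (hφ : IsStronglyMonotone φ r)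
    (hr_le : ∀ a b, r a b → a ≤ b) (hr_open : IsOpen {q : X × X | r q.1 q.2})
    (hx : IsCompact (closure (φ.orbit x))) (hy : IsCompact (closure (φ.orbit y))) (hxy : x < y) :
    (∀ p ∈ omegaLimit atTop φ {x}, ∀ q ∈ omegaLimit atTop φ {y}, r p q) ∨
      (omegaLimit atTop φ {x} = omegaLimit atTop φ {y} ∧
        ∀ e ∈ omegaLimit atTop φ {x}, ∀ t, φ t e = e) := by
  refine ((hφ.isStronglyOrderPreserving hr_le hr_open).omegaLimit_dichotomy hx hy hxy).imp_left
    fun hlt p hp q hq ↦ ?_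
  obtain ⟨p', hp', rfl⟩ := surjOn_omegaLimit hx 1 hp
  obtain ⟨q', hq', rfl⟩ := surjOn_omegaLimit hy 1 hq
  exact hφ (hlt p' hp' q' hq') one_pos

end Semiflow

section RealTime

variable {X : Type*} [TopologicalSpace X]

/-- The semiflow over `ℝ≥0` given by the nonnegative times of a map `φ : ℝ → X → X`; the values of
`φ` at negative times are ignored. -/
def nonnegFlow (φ : ℝ → X → X) (hφc : Continuous fun q : ℝ × X ↦ φ q.1 q.2)
    (hφ0 : ∀ x, φ 0 x = x)
    (hφadd : ∀ s t : ℝ, 0 ≤ s → 0 ≤ t → ∀ x, φ (s + t) x = φ s (φ t x)) : Flow ℝ≥0 X where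
  toFun t := φ t
  cont' := hφc.comp (NNReal.continuous_coe.prodMap continuous_id)
  map_add' s t := hφadd s t s.2 t.2
  map_zero' := hφ0

theorem omegaLimit_coe_nnreal (φ : ℝ → X → X) (z : X) :
    omegaLimit atTop (fun t : ℝ≥0 ↦ φ t) {z} =
      ⋂ (s : ℝ) (_ : 0 ≤ s), closure {w | ∃ t : ℝ, s ≤ t ∧ φ t z = w} := by
  ext p
  rw [mem_omegaLimit_singleton_iff_mapClusterPt, mapClusterPt_atTop_iff_forall_mem_closure,
    NNReal.forall, mem_iInter₂]
  refine forall₂_congr fun s hs ↦ ?_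
  have htail : (fun t : ℝ≥0 ↦ φ t z) '' Ici (NNReal.mk s hs) =
      {w | ∃ t : ℝ, s ≤ t ∧ φ t z = w} := by
    ext w
    exact ⟨fun ⟨t, ht, hw⟩ ↦ ⟨t, ht, hw⟩, fun ⟨t, ht, hw⟩ ↦ ⟨⟨t, hs.trans ht⟩, ht, hw⟩⟩
  rw [htail]

end RealTime

/-- Limit set dichotomy (weak form): for `x ≤ y`, `x ≠ y`, either
`ω(x) ≪ ω(y)` pointwise, or `ω(x) = ω(y)` and all its points are equilibria. -/
theorem limit_set_dichotomy {X : Type*} [MetricSpace X] [PartialOrder X]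
    (lt : X → X → Prop)
    (hclosed : IsClosed {q : X × X | q.1 ≤ q.2})
    (hlt_le : ∀ a b, lt a b → a ≤ b)
    (hlt_ne : ∀ a b, lt a b → a ≠ b)
    (hopen : ∀ a b, lt a b → ∃ U V : Set X, IsOpen U ∧ IsOpen V ∧ a ∈ U ∧ b ∈ V ∧
      ∀ u ∈ U, ∀ v ∈ V, lt u v)
    (hquasi : ∀ (a b : X) (u v : ℕ → X), (∀ n, lt (u n) (v n)) →
      Tendsto u atTop (𝓝 a) → Tendsto v atTop (𝓝 b) → a ≤ b)
    (φ : ℝ → X → X)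
    (hφc : Continuous fun q : ℝ × X => φ q.1 q.2)
    (hφ0 : ∀ x, φ 0 x = x)
    (hφadd : ∀ s t : ℝ, 0 ≤ s → 0 ≤ t → ∀ x, φ (s + t) x = φ s (φ t x))
    (hmono : ∀ x y : X, x ≤ y → x ≠ y → ∀ t : ℝ, 0 < t → lt (φ t x) (φ t y))
    (hcompact : ∀ z : X, IsCompact (closure {w | ∃ t : ℝ, 0 ≤ t ∧ φ t z = w}))
    (ω : X → Set X)
    (hω : ∀ z, ω z = ⋂ (s : ℝ) (_ : 0 ≤ s), closure {w | ∃ t : ℝ, s ≤ t ∧ φ t z = w})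
    (x y : X) (hxy : x ≤ y) (hne : x ≠ y) :
    (∀ p ∈ ω x, ∀ q ∈ ω y, lt p q) ∨
      (ω x = ω y ∧ ∀ e ∈ ω x, ∀ t : ℝ, 0 ≤ t → φ t e = e) := by
  have : OrderClosedTopology X := ⟨hclosed⟩
  let ψ : Flow ℝ≥0 X := nonnegFlow φ hφc hφ0 hφadd
  have hψ : IsStronglyMonotone ψ lt := fun x y hxy t ht ↦ hmono x y hxy.le hxy.ne t ht
  have hlt_open : IsOpen {q : X × X | lt q.1 q.2} := isOpen_prod_iff.2 fun a b hab ↦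
    let ⟨U, V, hU, hV, ha, hb, hUV⟩ := hopen a b hab
    ⟨U, V, hU, hV, ha, hb, fun q hq ↦ hUV q.1 hq.1 q.2 hq.2⟩
  have horbit (z : X) : IsCompact (closure (ψ.orbit z)) := by
    convert hcompact z using 2
    ext w
    exact ⟨fun ⟨t, ht⟩ ↦ ⟨t, t.2, ht⟩, fun ⟨t, ht, hw⟩ ↦ ⟨⟨t, ht⟩, hw⟩⟩
  have hωψ (z : X) : ω z = omegaLimit atTop ψ {z} := (hω z).trans (omegaLimit_coe_nnreal φ z).symm
  simp only [hωψ]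
  exact (limit_set_dichotomy_general hψ hlt_le hlt_open (horbit x) (horbit y)
    (hxy.lt_of_ne hne)).imp_right fun ⟨heq, hfix⟩ ↦ ⟨heq, fun e he t ht ↦ hfix e he ⟨t, ht⟩⟩
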